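/- Every finite simple graph G of minimum degree at least 2 has a 4-edge-coloring c : E(G) → {1,2,3,4} such that, for every vertex u of G and every color α ∈ {1,2,3,4}, at most ⌈d_G(u)/3⌉ of the edges incident with u have color α; in particular, for every vertex u of degree d at least 4, at most (d+2)/3 of the incident edges have the same color. -/

import Mathlib

/-!
Split every vertex `u` into `⌈d(u)/k⌉` copies, distributing the edges at `u` so that each copy
receives at most `k` of them. By Vizing's theorem the resulting graph has a proper edge coloring
with `k + 1` colors. Back in `G`, each color occurs at `u` at most once per copy.

Vizing's theorem is proved by adding one edge `xy₀` at a time. Take a maximal fan `y₀, …, yₙ`: each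
`x yᵢ₊₁` is an edge whose color is missing at `yᵢ`. A color missing at both `x` and `yₙ` finishes
the step, since the colors can be shifted down the fan. Otherwise let `a` be missing at `x` and `d`
at `yₙ`. By maximality the edge of color `d` at `x` is some `x yⱼ₊₁`, so `d` is missing at `yⱼ` too.
Then `x`, `yⱼ`, `yₙ` are ends of paths in the subgraph of edges colored `a` or `d`, so `yⱼ` or `yₙ`
is not in the component of `x`; exchanging `a` and `d` on its component makes `a` missing there,
and the fan up to that vertex can be shifted.
-/

open Finset SimpleGraph

section Ends

variable {W : Type*} {K : SimpleGraph W}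

theorem card_filter_degree_le_one_le_two [Fintype W] [DecidableRel K.Adj] (hK : K.Connected)
    (hdeg : ∀ v, K.degree v ≤ 2) : #{v | K.degree v ≤ 1} ≤ 2 := by
  have degree_add_le (v : W) : K.degree v + (if K.degree v ≤ 1 then 1 else 0) ≤ 2 := by
    have := hdeg v
    split_ifs <;> omega
  have edges_add_ends : 2 * #K.edgeFinset + #{v | K.degree v ≤ 1} ≤ 2 * Fintype.card W :=
    calc 2 * #K.edgeFinset + #{v | K.degree v ≤ 1}
        = ∑ v, (K.degree v + if K.degree v ≤ 1 then 1 else 0) := by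
          rw [sum_add_distrib, sum_degrees_eq_twice_card_edges, card_filter]
      _ ≤ ∑ _v : W, 2 := sum_le_sum fun v _ => degree_add_le v
      _ = 2 * Fintype.card W := by simp [mul_comm]
  have card_le := hK.card_vert_le_card_edgeSet_add_one
  rw [Nat.card_eq_fintype_card, Nat.card_eq_fintype_card, ← edgeFinset_card] at card_le
  omega

theorem ncard_supp_inter_ends_le_two [Finite W] (hdeg : ∀ v, (K.neighborSet v).ncard ≤ 2)
    (C : K.ConnectedComponent) : {v ∈ C.supp | (K.neighborSet v).ncard ≤ 1}.ncard ≤ 2 := by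
  classical
  have := Fintype.ofFinite W
  have degree_eq (v : C.supp) : (K.induce C.supp).degree v = (K.neighborSet v.1).ncard := by
    rw [degree_induce_of_neighborSet_subset fun w hw => C.mem_supp_of_adj_mem_supp v.2 hw,
      ← card_neighborSet_eq_degree, Set.ncard_eq_toFinset_card', Set.toFinset_card]
  have hconn : (K.induce C.supp).Connected := C.connected_toSimpleGraph
  have ends_eq : {v ∈ C.supp | (K.neighborSet v).ncard ≤ 1} =
      (↑) '' (({v | (K.induce C.supp).degree v ≤ 1} : Finset C.supp) : Set C.supp) := by
    ext v
    simp [degree_eq, and_comm]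
  rw [ends_eq, Set.ncard_image_of_injective _ Subtype.val_injective, Set.ncard_coe_finset]
  exact card_filter_degree_le_one_le_two hconn fun v => (degree_eq v).trans_le (hdeg v)

theorem not_reachable_of_three_ends [Finite W] (hdeg : ∀ v, (K.neighborSet v).ncard ≤ 2)
    {x y z : W} (hxy : x ≠ y) (hxz : x ≠ z) (hyz : y ≠ z) (hx : (K.neighborSet x).ncard ≤ 1)
    (hy : (K.neighborSet y).ncard ≤ 1) (hz : (K.neighborSet z).ncard ≤ 1)
    (rxy : K.Reachable x y) : ¬ K.Reachable x z := fun rxz =>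
  (ncard_supp_inter_ends_le_two hdeg (K.connectedComponentMk x)).not_gt <|
    (Set.two_lt_ncard).2 ⟨x, ⟨rfl, hx⟩, y, ⟨ConnectedComponent.sound rxy.symm, hy⟩,
      z, ⟨ConnectedComponent.sound rxz.symm, hz⟩, hxy, hxz, hyz⟩

end Ends

section Coloring

variable {W C : Type*} {H : SimpleGraph W} {c : Sym2 W → C} {x u : W} {a b e : C}

/-- `c` is a proper edge coloring of `H`: edges of `H` sharing an endpoint have distinct colors.
The coloring is defined on all of `Sym2 W`, and its values outside `H.edgeSet` are irrelevant, so
that it can be kept while edges are added to `H`. -/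
def IsProperEdgeColoring (H : SimpleGraph W) (c : Sym2 W → C) : Prop :=
  ∀ u, Set.InjOn (fun v => c s(u, v)) (H.neighborSet u)

/-- The color `a` is missing at the vertex `u`: no edge of `H` at `u` has color `a`. -/
def MissesColor (H : SimpleGraph W) (c : Sym2 W → C) (u : W) (a : C) : Prop :=
  ∀ v, H.Adj u v → c s(u, v) ≠ a

theorem exists_missesColor [Finite W] [Finite C] (c : Sym2 W → C)
    (hu : (H.neighborSet u).ncard < Nat.card C) : ∃ a, MissesColor H c u a := by
  have card_lt : ((fun v => c s(u, v)) '' H.neighborSet u).ncard < (Set.univ : Set C).ncard := by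
    rw [Set.ncard_univ]
    exact (Set.ncard_image_le).trans_lt hu
  obtain ⟨a, -, ha⟩ := Set.exists_mem_notMem_of_ncard_lt_ncard card_lt
  exact ⟨a, fun v hv hva => ha ⟨v, hv, hva⟩⟩

theorem MissesColor.update_of_notMem [DecidableEq W] (h : MissesColor H c u b) {p : Sym2 W}
    (hu : u ∉ p) : MissesColor H (Function.update c p a) u b := fun v hv => by
  have hne : s(u, v) ≠ p := fun hp => hu (hp ▸ Sym2.mem_mk_left u v)
  rw [Function.update_of_ne hne]
  exact h v hv

namespace IsProperEdgeColoring

theorem update [DecidableEq W] (hc : IsProperEdgeColoring H c) {y : W}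
    (hx : MissesColor H c x a) (hy : MissesColor H c y a) :
    IsProperEdgeColoring (H ⊔ edge x y) (Function.update c s(x, y) a) := by
  have eq_of_adj {u v w : W} : H.Adj u v → H.Adj u w → c s(u, v) = c s(u, w) → v = w :=
    fun hv hw h => hc u hv hw h
  intro u v hv w hw h
  simp only [mem_neighborSet, sup_adj, edge_adj] at hv hw
  simp only [Function.update_apply, Sym2.eq_iff] at h
  unfold MissesColor at hx hy
  grind

theorem missesColor_update [DecidableEq W] (hc : IsProperEdgeColoring H c) {v : W}
    (hv : H.Adj x v) (hx : MissesColor H c x a) :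
    MissesColor H (Function.update c s(x, v) a) x (c s(x, v)) := by
  intro w hw
  obtain rfl | hwv := eq_or_ne w v
  · rw [Function.update_self]
    exact (hx w hw).symm
  · rw [Function.update_of_ne (by simpa [hv.ne] using hwv)]
    exact fun h => hwv (hc x hw hv h)

theorem ncard_neighborSet_le (hc : IsProperEdgeColoring H c) {K : SimpleGraph W} (hK : K ≤ H)
    {s : Finset C} (hs : ∀ v, K.Adj u v → c s(u, v) ∈ s) : (K.neighborSet u).ncard ≤ #s := by
  rw [← Set.ncard_coe_finset]
  exact Set.ncard_le_ncard_of_injOn _ hs ((hc u).mono fun v hv => hK hv)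

end IsProperEdgeColoring

/-- The subgraph of `H` formed by the edges of color `a` or `b`; its components are the Kempe
chains of the pair `a`, `b`. -/
def bicolored (H : SimpleGraph W) (c : Sym2 W → C) (a b : C) : SimpleGraph W where
  Adj u v := H.Adj u v ∧ (c s(u, v) = a ∨ c s(u, v) = b)
  symm := ⟨fun u v h => ⟨h.1.symm, by rw [Sym2.eq_swap]; exact h.2⟩⟩
  loopless := ⟨fun _ h => H.irrefl h.1⟩

theorem bicolored_le : bicolored H c a b ≤ H := fun _ _ h => h.1

namespace IsProperEdgeColoring

theorem ncard_neighborSet_bicolored_le_two (hc : IsProperEdgeColoring H c) :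
    ((bicolored H c a b).neighborSet u).ncard ≤ 2 := by
  classical
  exact (hc.ncard_neighborSet_le bicolored_le (s := {a, b}) fun v hv => by simpa using hv.2).trans
    card_le_two

theorem ncard_neighborSet_bicolored_le_one (hc : IsProperEdgeColoring H c)
    (hu : MissesColor H c u a ∨ MissesColor H c u b) :
    ((bicolored H c a b).neighborSet u).ncard ≤ 1 := by
  obtain hu | hu := hu
  · exact hc.ncard_neighborSet_le bicolored_le (s := {b}) fun v hv => by
      simpa using hv.2.resolve_left (hu v hv.1)
  · exact hc.ncard_neighborSet_le bicolored_le (s := {a}) fun v hv => by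
      simpa using hv.2.resolve_right (hu v hv.1)

end IsProperEdgeColoring

open Classical in
/-- The Kempe change of `c` at `z`: exchange the colors `a` and `b` on the edges with an endpoint in
the component of `z` in `bicolored H c a b`. Edges leaving that component have neither color, so
they are unaffected. -/
noncomputable def kempeChange (H : SimpleGraph W) (c : Sym2 W → C) (a b : C) (z : W) :
    Sym2 W → C := fun p =>
  if ∃ u ∈ p, (bicolored H c a b).Reachable z u then Equiv.swap a b (c p) else c p

variable {z v : W}

open Classical in
theorem kempeChange_of_reachable (hu : (bicolored H c a b).Reachable z u) :
    kempeChange H c a b z s(u, v) = Equiv.swap a b (c s(u, v)) :=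
  if_pos ⟨u, Sym2.mem_mk_left u v, hu⟩

theorem kempeChange_of_not_reachable (huv : H.Adj u v)
    (hu : ¬ (bicolored H c a b).Reachable z u) :
    kempeChange H c a b z s(u, v) = c s(u, v) := by
  classical
  by_cases hv : (bicolored H c a b).Reachable z v
  · have hcol : ¬ (c s(u, v) = a ∨ c s(u, v) = b) := fun h =>
      hu (hv.trans (Adj.reachable (G := bicolored H c a b) ⟨huv, h⟩).symm)
    rw [not_or] at hcol
    rw [Sym2.eq_swap, kempeChange_of_reachable hv, Sym2.eq_swap,
      Equiv.swap_apply_of_ne_of_ne hcol.1 hcol.2]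
  · exact if_neg (by simp [hu, hv])

protected theorem IsProperEdgeColoring.kempeChange (hc : IsProperEdgeColoring H c) (a b : C)
    (z : W) : IsProperEdgeColoring H (kempeChange H c a b z) := by
  classical
  intro u v hv w hw h
  by_cases hu : (bicolored H c a b).Reachable z u
  · simp only [kempeChange_of_reachable hu] at h
    exact hc u hv hw ((Equiv.swap a b).injective h)
  · simp only [kempeChange_of_not_reachable hv hu, kempeChange_of_not_reachable hw hu] at h
    exact hc u hv hw h

namespace MissesColor

protected theorem kempeChange_of_not_reachable (h : MissesColor H c u e)
    (hu : ¬ (bicolored H c a b).Reachable z u) :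
    MissesColor H (kempeChange H c a b z) u e := fun v hv => by
  rw [kempeChange_of_not_reachable hv hu]
  exact h v hv

open Classical in
protected theorem kempeChange_of_reachable (h : MissesColor H c u e)
    (hu : (bicolored H c a b).Reachable z u) :
    MissesColor H (kempeChange H c a b z) u (Equiv.swap a b e) := fun v hv => by
  rw [kempeChange_of_reachable hu, (Equiv.swap a b).injective.ne_iff]
  exact h v hv

theorem kempeChange_of_ne (h : MissesColor H c u e) (hea : e ≠ a) (heb : e ≠ b) :
    MissesColor H (kempeChange H c a b z) u e := by
  classical
  by_cases hu : (bicolored H c a b).Reachable z u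
  · simpa only [Equiv.swap_apply_of_ne_of_ne hea heb] using h.kempeChange_of_reachable hu
  · exact h.kempeChange_of_not_reachable hu

end MissesColor

end Coloring

section Fan

variable {W C : Type*} {H : SimpleGraph W} {c : Sym2 W → C} {x : W} {y : ℕ → W} {n : ℕ} {a d : C}

/-- The vertices `y 0, …, y n` form a Vizing fan at `x`: they are distinct, and each
`s(x, y (i + 1))` is an edge whose color is missing at `y i`. There is no condition on `s(x, y 0)`,
which stands for the edge still to be colored, and the values of `y` beyond `n` are irrelevant. -/
structure IsFan (H : SimpleGraph W) (c : Sym2 W → C) (x : W) (y : ℕ → W) (n : ℕ) : Prop where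
  injOn : Set.InjOn y (Set.Iic n)
  adj : ∀ i < n, H.Adj x (y (i + 1))
  missesColor : ∀ i < n, MissesColor H c (y i) (c s(x, y (i + 1)))

namespace IsFan

theorem mono (hf : IsFan H c x y n) {m : ℕ} (hm : m ≤ n) : IsFan H c x y m where
  injOn := hf.injOn.mono (Set.Iic_subset_Iic.2 hm)
  adj i hi := hf.adj i (hi.trans_le hm)
  missesColor i hi := hf.missesColor i (hi.trans_le hm)

theorem ne_apply (hf : IsFan H c x y n) (h0 : x ≠ y 0) : ∀ i ≤ n, x ≠ y i
  | 0, _ => h0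
  | i + 1, hi => (hf.adj i hi).ne

theorem le_card [Finite W] (hf : IsFan H c x y n) : n ≤ Nat.card W := by
  have card_le : (Set.Iic n).ncard ≤ (Set.univ : Set W).ncard :=
    Set.ncard_le_ncard_of_injOn y (fun _ _ => Set.mem_univ _) hf.injOn
  rw [Set.ncard_univ, Set.ncard_eq_toFinset_card', Set.toFinset_Iic, Nat.card_Iic] at card_le
  omega

theorem snoc (hf : IsFan H c x y n) {v : W} (hv : H.Adj x v)
    (hmiss : MissesColor H c (y n) (c s(x, v))) (hnew : ∀ i ≤ n, y i ≠ v) :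
    IsFan H c x (Function.update y (n + 1) v) (n + 1) := by
  have update_of_le {i : ℕ} (hi : i ≤ n) : Function.update y (n + 1) v i = y i :=
    Function.update_of_ne (by omega) v y
  refine ⟨fun i hi j hj hij => ?_, fun i hi => ?_, fun i hi => ?_⟩
  · obtain hi | rfl := Nat.le_succ_iff.1 hi <;> obtain hj | rfl := Nat.le_succ_iff.1 hj
    · rw [update_of_le hi, update_of_le hj] at hij
      exact hf.injOn hi hj hij
    · rw [update_of_le hi, Function.update_self] at hij
      exact absurd hij (hnew i hi)
    · rw [update_of_le hj, Function.update_self] at hij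
      exact absurd hij.symm (hnew j hj)
    · rfl
  · obtain hi | rfl := Nat.lt_succ_iff_lt_or_eq.1 hi
    · rw [update_of_le hi]
      exact hf.adj i hi
    · rwa [Function.update_self]
  · rw [update_of_le (Nat.lt_succ_iff.1 hi)]
    obtain hi | rfl := Nat.lt_succ_iff_lt_or_eq.1 hi
    · rw [update_of_le hi]
      exact hf.missesColor i hi
    · rwa [Function.update_self]

theorem exists_maximal [Finite W] (H : SimpleGraph W) (c : Sym2 W → C) (x y₀ : W) :
    ∃ y n, y 0 = y₀ ∧ IsFan H c x y n ∧
      ∀ v, H.Adj x v → MissesColor H c (y n) (c s(x, v)) → ∃ i ≤ n, y i = v := by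
  let lengths : Set ℕ := {n | ∃ y, y 0 = y₀ ∧ IsFan H c x y n}
  have bounded : BddAbove lengths := ⟨Nat.card W, fun n ⟨_, _, hf⟩ => hf.le_card⟩
  have zero_mem : 0 ∈ lengths :=
    ⟨fun _ => y₀, rfl, fun i hi j hj _ => by simp_all, by simp, by simp⟩
  obtain ⟨y, hy0, hf⟩ := Nat.sSup_mem ⟨0, zero_mem⟩ bounded
  refine ⟨y, _, hy0, hf, fun v hv hmiss => ?_⟩
  by_contra! hnew
  have longer : sSup lengths + 1 ∈ lengths :=
    ⟨_, by rwa [Function.update_of_ne (by omega)], hf.snoc hv hmiss hnew⟩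
  exact (le_csSup bounded longer).not_gt (Nat.lt_succ_self _)

/-- Shift the colors down the fan: `s(x, y n)` takes the color `a` and passes its own on to
`s(x, y (n - 1))`, and so on until `s(x, y 0)` receives a color. -/
theorem exists_coloring_sup_edge (hf : IsFan H c x y n) (hc : IsProperEdgeColoring H c)
    (h0 : x ≠ y 0) (hx : MissesColor H c x a) (hy : MissesColor H c (y n) a) :
    ∃ c' : Sym2 W → C, IsProperEdgeColoring (H ⊔ edge x (y 0)) c' := by
  classical
  induction n generalizing c a with
  | zero => exact ⟨_, hc.update hx hy⟩
  | succ n ih =>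
    have hadj : H.Adj x (y (n + 1)) := hf.adj n n.lt_succ_self
    have notMem {i : ℕ} (hi : i ≤ n) : y i ∉ s(x, y (n + 1)) := by
      have ne_last : y i ≠ y (n + 1) := fun h => by
        have := hf.injOn (Set.mem_Iic.2 (by omega)) (Set.mem_Iic.2 le_rfl) h
        omega
      simp [ne_last, (hf.ne_apply h0 i (by omega)).symm]
    have hc' : IsProperEdgeColoring H (Function.update c s(x, y (n + 1)) a) := by
      simpa only [sup_edge_of_adj H hadj] using hc.update hx hy
    refine ih ⟨(hf.mono n.le_succ).injOn, (hf.mono n.le_succ).adj, fun i hi => ?_⟩ hc'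
      (hc.missesColor_update hadj hx)
      ((hf.missesColor n n.lt_succ_self).update_of_notMem (notMem le_rfl))
    have edge_ne : s(x, y (i + 1)) ≠ s(x, y (n + 1)) := fun h =>
      notMem hi (h ▸ Sym2.mem_mk_right x (y (i + 1)))
    rw [Function.update_of_ne edge_ne]
    exact (hf.missesColor i (by omega)).update_of_notMem (notMem hi.le)

protected theorem kempeChange (hf : IsFan H c x y n)
    (hx : MissesColor H c x a) (hsep : ¬ (bicolored H c a d).Reachable (y n) x)
    (hd : ∀ i < n, c s(x, y (i + 1)) = d → ¬ (bicolored H c a d).Reachable (y n) (y i)) :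
    IsFan H (kempeChange H c a d (y n)) x y n := by
  refine ⟨hf.injOn, hf.adj, fun i hi => ?_⟩
  rw [kempeChange_of_not_reachable (hf.adj i hi) hsep]
  by_cases hcol : c s(x, y (i + 1)) = d
  · exact (hf.missesColor i hi).kempeChange_of_not_reachable (hd i hi hcol)
  · exact (hf.missesColor i hi).kempeChange_of_ne (hx _ (hf.adj i hi)) hcol

theorem exists_coloring_sup_edge_of_not_reachable (hf : IsFan H c x y n)
    (hc : IsProperEdgeColoring H c) (h0 : x ≠ y 0) (hx : MissesColor H c x a)
    (hy : MissesColor H c (y n) d) (hsep : ¬ (bicolored H c a d).Reachable (y n) x)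
    (hd : ∀ i < n, c s(x, y (i + 1)) = d → ¬ (bicolored H c a d).Reachable (y n) (y i)) :
    ∃ c' : Sym2 W → C, IsProperEdgeColoring (H ⊔ edge x (y 0)) c' := by
  classical
  have hy' : MissesColor H (kempeChange H c a d (y n)) (y n) a := by
    simpa using hy.kempeChange_of_reachable (a := a) (b := d) (.refl (y n))
  exact (hf.kempeChange hx hsep hd).exists_coloring_sup_edge (hc.kempeChange a d (y n)) h0
    (hx.kempeChange_of_not_reachable hsep) hy'

end IsFan

end Fan

section Vizing

variable {W C : Type*} [Finite W] [Finite C] {H : SimpleGraph W} {c : Sym2 W → C}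

theorem IsProperEdgeColoring.exists_sup_edge (hc : IsProperEdgeColoring H c)
    (hdeg : ∀ v, (H.neighborSet v).ncard < Nat.card C) {x y₀ : W} (hne : x ≠ y₀)
    (hnadj : ¬ H.Adj x y₀) : ∃ c' : Sym2 W → C, IsProperEdgeColoring (H ⊔ edge x y₀) c' := by
  obtain ⟨y, n, rfl, hf, hmax⟩ := IsFan.exists_maximal H c x y₀
  obtain ⟨a, ha⟩ := exists_missesColor c (hdeg x)
  obtain ⟨d, hd⟩ := exists_missesColor c (hdeg (y n))
  by_cases hdx : MissesColor H c x d
  · exact hf.exists_coloring_sup_edge hc hne hdx hd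
  obtain ⟨v, hv, rfl⟩ : ∃ v, H.Adj x v ∧ c s(x, v) = d := by simpa [MissesColor] using hdx
  obtain ⟨_ | j, hj, rfl⟩ := hmax v hv hd
  · exact absurd hv hnadj
  have hdj := hf.missesColor j hj
  have eq_j {i : ℕ} (hi : i < n) (h : c s(x, y (i + 1)) = c s(x, y (j + 1))) : i = j :=
    Nat.succ_injective (hf.injOn (Set.mem_Iic.2 hi) (Set.mem_Iic.2 hj) (hc x (hf.adj i hi) hv h))
  by_cases hxj : (bicolored H c a (c s(x, y (j + 1)))).Reachable x (y j)
  · have hxn : ¬ (bicolored H c a (c s(x, y (j + 1)))).Reachable x (y n) := by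
      refine not_reachable_of_three_ends (fun _ => hc.ncard_neighborSet_bicolored_le_two)
        (hf.ne_apply hne j (by omega)) (hf.ne_apply hne n le_rfl) ?_
        (hc.ncard_neighborSet_bicolored_le_one (.inl ha))
        (hc.ncard_neighborSet_bicolored_le_one (.inr hdj))
        (hc.ncard_neighborSet_bicolored_le_one (.inr hd)) hxj
      intro h
      exact (Nat.lt_of_succ_le hj).ne (hf.injOn (Set.mem_Iic.2 (by omega)) (Set.mem_Iic.2 le_rfl) h)
    refine hf.exists_coloring_sup_edge_of_not_reachable hc hne ha hd (fun h => hxn h.symm) ?_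
    rintro i hi hcol hni
    obtain rfl := eq_j hi hcol
    exact hxn (hxj.trans hni.symm)
  · refine (hf.mono (by omega)).exists_coloring_sup_edge_of_not_reachable hc hne ha hdj
      (fun h => hxj h.symm) fun i hi hcol => ?_
    exact absurd (eq_j (by omega) hcol) hi.ne

theorem exists_isProperEdgeColoring_of_ncard_neighborSet_lt
    (hdeg : ∀ v, (H.neighborSet v).ncard < Nat.card C) :
    ∃ c : Sym2 W → C, IsProperEdgeColoring H c := by
  let colorable : Set (SimpleGraph W) :=
    {H' | H' ≤ H ∧ ∃ c : Sym2 W → C, IsProperEdgeColoring H' c}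
  have bot_mem : ⊥ ∈ colorable := by
    have nonempty_color (p : Sym2 W) : Nonempty C :=
      p.ind fun u _ => (Nat.card_pos_iff.1 ((Nat.zero_le _).trans_lt (hdeg u))).1
    exact ⟨bot_le, fun p => (nonempty_color p).some, fun u v hv => hv.elim⟩
  obtain ⟨H', ⟨hle, c, hc⟩, hmax⟩ := (Set.toFinite colorable).exists_maximal ⟨⊥, bot_mem⟩
  suffices H ≤ H' from ⟨c, this.antisymm hle ▸ hc⟩
  intro x y hxy
  by_contra hnadj
  have hdeg' (v : W) : (H'.neighborSet v).ncard < Nat.card C :=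
    (Set.ncard_le_ncard fun w hw => hle hw).trans_lt (hdeg v)
  have mem : H' ⊔ edge x y ∈ colorable :=
    ⟨sup_le hle ((edge_le_iff H).2 (.inr hxy)), hc.exists_sup_edge hdeg' hxy.ne hnadj⟩
  exact (lt_sup_edge H' x y hxy.ne hnadj).not_ge (hmax mem le_sup_left)

end Vizing

section VertexSplit

variable {V ι C : Type*} {G : SimpleGraph V} {p : V → V → ι}

/-- The graph obtained from `G` by splitting each vertex `u` into copies `(u, i)` and attaching the
edge `uv` to the copies `(u, p u v)` and `(v, p v u)`. Copies not of this form are isolated. -/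
def vertexSplit (G : SimpleGraph V) (p : V → V → ι) : SimpleGraph (V × ι) where
  Adj s t := G.Adj s.1 t.1 ∧ p s.1 t.1 = s.2 ∧ p t.1 s.1 = t.2
  symm := ⟨fun _ _ h => ⟨h.1.symm, h.2.2, h.2.1⟩⟩
  loopless := ⟨fun _ h => G.irrefl h.1⟩

theorem neighborSet_vertexSplit (u : V) (i : ι) : (vertexSplit G p).neighborSet (u, i) =
    (fun v => (v, p v u)) '' {v | G.Adj u v ∧ p u v = i} := by
  ext ⟨v, j⟩
  simp [vertexSplit, and_assoc]

theorem ncard_neighborSet_vertexSplit (u : V) (i : ι) :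
    ((vertexSplit G p).neighborSet (u, i)).ncard = {v | G.Adj u v ∧ p u v = i}.ncard := by
  rw [neighborSet_vertexSplit]
  exact Set.ncard_image_of_injective _ fun _ _ h => congrArg Prod.fst h

/-- The coloring of the edges of `G` induced by a coloring of the edges of `vertexSplit G p`. -/
def splitPullback (p : V → V → ι) (c : Sym2 (V × ι) → C) : Sym2 V → C :=
  Sym2.lift ⟨fun u v => c s((u, p u v), (v, p v u)), fun _ _ => congrArg c Sym2.eq_swap⟩

theorem IsProperEdgeColoring.injOn_splitPullback {c : Sym2 (V × ι) → C}
    (hc : IsProperEdgeColoring (vertexSplit G p) c) (u : V) (a : C) :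
    Set.InjOn (p u) {v | G.Adj u v ∧ splitPullback p c s(u, v) = a} := by
  rintro v ⟨hv, hva⟩ w ⟨hw, hwa⟩ hvw
  refine congrArg Prod.fst (hc (u, p u v) ⟨hv, rfl, rfl⟩ (⟨hw, hvw.symm, rfl⟩ :
    (vertexSplit G p).Adj (u, p u v) (w, p w u)) (hva.trans ?_))
  rw [← hwa, hvw]
  rfl

end VertexSplit

theorem exists_blocks_ncard_le {α : Type*} {s : Set α} (hs : s.Finite) {k : ℕ} (hk : 0 < k) :
    ∃ f : α → ℕ, (∀ v ∈ s, f v < s.ncard ⌈/⌉ k) ∧ ∀ i, {v ∈ s | f v = i}.ncard ≤ k := by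
  have encard_le : s.encard ≤ (Set.Iio s.ncard).encard := by
    rw [← hs.cast_ncard_eq, ← (Set.finite_Iio s.ncard).cast_ncard_eq]
    simp
  obtain ⟨idx, idx_lt, idx_inj⟩ := hs.exists_injOn_of_encard_le encard_le
  refine ⟨fun v => idx v / k, fun v hv => ?_, fun i => ?_⟩
  · rw [Nat.div_lt_iff_lt_mul hk, mul_comm]
    exact (idx_lt hv).trans_le (le_smul_ceilDiv hk)
  · calc {v ∈ s | idx v / k = i}.ncard
        ≤ (Set.Iio k).ncard := by
          refine Set.ncard_le_ncard_of_injOn (fun v => idx v % k) (fun v _ => Nat.mod_lt _ hk) ?_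
          rintro v ⟨hv, rfl⟩ w ⟨hw, hdiv⟩ hmod
          exact idx_inj hv hw (Nat.ext_div_mod hdiv.symm hmod)
      _ = k := by simp

theorem exists_coloring_ncard_le_ceilDiv {V C : Type*} [Finite V] [Finite C] (G : SimpleGraph V)
    {k : ℕ} (hk : 0 < k) (hC : k < Nat.card C) :
    ∃ c : Sym2 V → C, ∀ u a,
      {v | G.Adj u v ∧ c s(u, v) = a}.ncard ≤ (G.neighborSet u).ncard ⌈/⌉ k := by
  choose f f_lt fiber_le using fun u => exists_blocks_ncard_le (G.neighborSet u).toFinite hk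
  let p (u v : V) : Set.range f.uncurry := ⟨f u v, (u, v), rfl⟩
  have p_eq_iff {u v : V} {i : Set.range f.uncurry} : p u v = i ↔ f u v = i := Subtype.ext_iff
  have degree_lt : ∀ s, ((vertexSplit G p).neighborSet s).ncard < Nat.card C := fun ⟨u, i⟩ => by
    rw [ncard_neighborSet_vertexSplit]
    simp only [p_eq_iff]
    exact (fiber_le u i).trans_lt hC
  obtain ⟨c, hc⟩ := exists_isProperEdgeColoring_of_ncard_neighborSet_lt degree_lt
  refine ⟨splitPullback p c, fun u a => ?_⟩
  calc {v | G.Adj u v ∧ splitPullback p c s(u, v) = a}.ncard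
      ≤ (Set.Iio ((G.neighborSet u).ncard ⌈/⌉ k)).ncard :=
        Set.ncard_le_ncard_of_injOn (f u) (fun v hv => f_lt u v hv.1) fun v hv w hw h =>
          hc.injOn_splitPullback u a hv hw (Subtype.ext h)
    _ = (G.neighborSet u).ncard ⌈/⌉ k := by simp

theorem card_filter_incidenceFinset {V : Type*} [DecidableEq V] (G : SimpleGraph V) (u : V)
    [Fintype (G.neighborSet u)] (P : Sym2 V → Prop) [DecidablePred P] :
    #{e ∈ G.incidenceFinset u | P e} = {v | G.Adj u v ∧ P s(u, v)}.ncard := by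
  have image_eq : (({e ∈ G.incidenceFinset u | P e} : Finset (Sym2 V)) : Set (Sym2 V)) =
      (fun v => s(u, v)) '' {v | G.Adj u v ∧ P s(u, v)} := by
    ext e
    simp only [coe_filter, mem_incidenceFinset, Set.mem_ofPred_eq, Set.mem_image]
    constructor
    · rintro ⟨⟨he, hu⟩, hP⟩
      obtain ⟨v, rfl⟩ := Sym2.mem_iff_exists.1 hu
      exact ⟨v, ⟨he, hP⟩, rfl⟩
    · rintro ⟨v, ⟨hv, hP⟩, rfl⟩
      exact ⟨⟨hv, Sym2.mem_mk_left u v⟩, hP⟩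
  rw [← Set.ncard_coe_finset, image_eq]
  exact Set.ncard_image_of_injective _ fun v w h => Sym2.congr_right.1 h

theorem natCast_ceilDiv (d : ℕ) {k : ℕ} (hk : 0 < k) :
    ((d ⌈/⌉ k : ℕ) : ℚ) = ⌈(d : ℚ) / k⌉ := by
  rw [← natCast_ceil_eq_intCast_ceil (by positivity), Nat.cast_inj]
  refine eq_of_forall_ge_iff fun m => ?_
  rw [ceilDiv_le_iff_le_mul hk, Nat.ceil_le, div_le_iff₀' (by positivity)]
  norm_cast

theorem ceil_natCast_div_natCast_le (d : ℕ) {k : ℕ} (hk : 0 < k) :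
    (⌈(d : ℚ) / k⌉ : ℚ) ≤ ((d : ℚ) + (k - 1)) / k := by
  rw [← natCast_ceilDiv d hk, Nat.ceilDiv_eq_add_pred_div, Nat.add_sub_assoc hk,
    ← Nat.cast_pred hk, ← Nat.cast_add]
  exact Nat.cast_div_le

theorem four_coloring_third_ceil_general {V : Type*} [Fintype V] [DecidableEq V]
    (G : SimpleGraph V) [DecidableRel G.Adj] {k : ℕ} (hk : 0 < k) :
    ∃ c : Sym2 V → Fin (k + 1), ∀ u : V, ∀ α : Fin (k + 1),
      (#{e ∈ G.incidenceFinset u | c e = α} : ℚ) ≤ ⌈(G.degree u : ℚ) / k⌉ := by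
  obtain ⟨c, hc⟩ := exists_coloring_ncard_le_ceilDiv (C := Fin (k + 1)) G hk (by simp)
  refine ⟨c, fun u α => ?_⟩
  rw [← natCast_ceilDiv _ hk, card_filter_incidenceFinset, ← card_neighborSet_eq_degree,
    ← Set.toFinset_card, ← Set.ncard_eq_toFinset_card']
  exact_mod_cast hc u α

/-- Every finite simple graph `G` of minimum degree at least `2` has a
`4`-edge-coloring such that, for every vertex `u` and every color `α`, at most
`⌈d_G(u)/3⌉` of the edges incident with `u` have color `α`; in particular (and
equivalently, since `⌈d/3⌉ = ⌊(d+2)/3⌋`), for every vertex `u` of degree `d ≥ 4`, at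
most `(d+2)/3` of the incident edges have the same color.  Here `(G.degree u + 2) / 3`
is natural division, which equals `⌈d_G(u)/3⌉`. -/
theorem four_coloring_third_ceil {V : Type*} [Fintype V] [DecidableEq V]
    (G : SimpleGraph V) [DecidableRel G.Adj] (hmin : ∀ v : V, 2 ≤ G.degree v) :
    ∃ c : Sym2 V → Fin 4, ∀ u : V, ∀ α : Fin 4,
      (((G.incidenceFinset u).filter (fun e => c e = α)).card : ℚ) ≤ ⌈(G.degree u : ℚ) / 3⌉ ∧
      (4 ≤ G.degree u →
        (((G.incidenceFinset u).filter (fun e => c e = α)).card : ℚ)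
          ≤ ((G.degree u : ℚ) + 2) / 3) := by
  obtain ⟨c, hc⟩ := four_coloring_third_ceil_general G three_pos
  exact ⟨c, fun u α => ⟨hc u α, fun _ =>
    (hc u α).trans ((ceil_natCast_div_natCast_le _ three_pos).trans_eq (by norm_num))⟩⟩
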